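/- Let c ∈ ℂ with Re(c) > 0 and let λ ∈ ℂ. Define f_λ(w) = (w + c)^λ using the principal branch of the complex power. Then sup_{0<x<∞} ∫_{-∞}^{∞} |f_λ(x + iy)|² dy < ∞ if and only if Re(λ) < -1/2. (In particular, taking c = b/(a-1) with a > 1 and Re(b) > 0, the function f_λ belongs to H²(ℂ₊) if and only if Re(λ) < -1/2.) -/

import Mathlib

open Complex MeasureTheory

/-!
The argument of a complex number is bounded, so `‖z ^ l‖` is comparable to `‖z‖ ^ l.re`, uniformly
in `z ≠ 0`. On a vertical line `z + iy` off the imaginary axis, `‖z + iy‖ ^ s` is continuous and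
grows like `|y| ^ s`, so it is integrable exactly when `s < -1`. Finiteness on the single line
`Re z = 1 + Re c` therefore forces `Re l < -1/2`. Conversely, when `Re l ≤ 0`, moving to the right
increases the `L²` norm over a line by at most a constant factor, so the line `Re z = Re c` controls
the supremum.
-/

open Asymptotics Filter

theorem norm_cpow_le_exp_mul_norm_cpow_of_norm_le {w z l : ℂ} (hw : w ≠ 0) (hwz : ‖w‖ ≤ ‖z‖)
    (hl : l.re ≤ 0) : ‖z ^ l‖ ≤ Real.exp (2 * Real.pi * |l.im|) * ‖w ^ l‖ := by
  have arg_mul_im_le (u : ℂ) : |arg u * l.im| ≤ Real.pi * |l.im| := by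
    rw [abs_mul]
    gcongr
    exact abs_arg_le_pi u
  have exponent_le : arg w * l.im - arg z * l.im ≤ 2 * Real.pi * |l.im| := by
    linarith [(abs_le.1 (arg_mul_im_le w)).2, (abs_le.1 (arg_mul_im_le z)).1]
  calc ‖z ^ l‖ ≤ ‖z‖ ^ l.re / Real.exp (arg z * l.im) := norm_cpow_le z l
    _ ≤ ‖w‖ ^ l.re / Real.exp (arg z * l.im) := by
      gcongr ?_ / _
      exact Real.rpow_le_rpow_of_nonpos (norm_pos_iff.2 hw) hwz hl
    _ = Real.exp (arg w * l.im - arg z * l.im) * ‖w ^ l‖ := by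
      rw [norm_cpow_of_ne_zero hw, Real.exp_sub]
      field_simp
    _ ≤ Real.exp (2 * Real.pi * |l.im|) * ‖w ^ l‖ := by gcongr

theorem norm_le_norm_ofReal_add {x : ℝ} {z : ℂ} (hz : 0 ≤ z.re) (hx : 0 ≤ x) :
    ‖z‖ ≤ ‖x + z‖ := by
  rw [← sq_le_sq₀ (norm_nonneg _) (norm_nonneg _), Complex.sq_norm, Complex.sq_norm,
    normSq_apply, normSq_apply]
  simp only [add_re, ofReal_re, add_im, ofReal_im, zero_add]
  gcongr <;> linarith

theorem integrable_iff_of_isTheta_top {α E F : Type*} [MeasurableSpace α] {μ : Measure α}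
    [NormedAddCommGroup E] [NormedAddCommGroup F] {f : α → E} {g : α → F}
    (hf : AEStronglyMeasurable f μ) (hg : AEStronglyMeasurable g μ) (hfg : f =Θ[⊤] g) :
    Integrable f μ ↔ Integrable g μ :=
  ⟨hfg.isBigO_symm.integrable hg, hfg.isBigO.integrable hf⟩

section VerticalLine

variable {z : ℂ}

theorem add_ofReal_mul_I_ne_zero (hz : z.re ≠ 0) (y : ℝ) : z + y * I ≠ 0 :=
  fun h => hz (by simpa using congrArg re h)

theorem isTheta_add_ofReal_mul_I_atTop (z : ℂ) :
    (fun y : ℝ => z + y * I) =Θ[atTop] fun y : ℝ => y := by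
  have isTheta_mul_I : (fun y : ℝ => (y : ℂ) * I) =Θ[atTop] fun y : ℝ => y :=
    .of_norm_eventuallyEq_norm (by simp)
  have const_isLittleO : (fun _ : ℝ => z) =o[atTop] fun y : ℝ => (y : ℂ) * I :=
    (isLittleO_const_id_atTop z).trans_isTheta isTheta_mul_I.symm
  exact const_isLittleO.right_isTheta_add.symm.trans isTheta_mul_I

theorem isTheta_norm_add_ofReal_mul_I_rpow_atTop (z : ℂ) (s : ℝ) :
    (fun y : ℝ => ‖z + y * I‖ ^ s) =Θ[atTop] fun y : ℝ => y ^ s :=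
  (isTheta_add_ofReal_mul_I_atTop z).norm_left.rpow
    (.of_forall fun _ => norm_nonneg _) (eventually_ge_atTop 0)

theorem continuous_norm_add_ofReal_mul_I_rpow (hz : z.re ≠ 0) (s : ℝ) :
    Continuous fun y : ℝ => ‖z + y * I‖ ^ s :=
  Continuous.rpow_const (by fun_prop) fun y =>
    .inl (norm_ne_zero_iff.2 (add_ofReal_mul_I_ne_zero hz y))

theorem integrable_norm_add_ofReal_mul_I_rpow_of_lt (hz : z.re ≠ 0) {s : ℝ} (hs : s < -1) :
    Integrable fun y : ℝ => ‖z + y * I‖ ^ s := by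
  have integrable_re : Integrable fun y : ℝ => ‖(z.re : ℂ) + y * I‖ ^ s := by
    have continuous_re := continuous_norm_add_ofReal_mul_I_rpow (z := z.re) (by simpa using hz) s
    refine continuous_re.locallyIntegrable.integrable_of_isBigO_atTop_of_norm_isNegInvariant
      (.of_forall fun y => ?_) (isTheta_norm_add_ofReal_mul_I_rpow_atTop z.re s).isBigO
      (integrableAtFilter_rpow_atTop_iff.2 hs)
    simp [Complex.norm_def, normSq_apply]
  refine (integrable_re.comp_add_right z.im).congr (.of_forall fun y => ?_)
  have translate : (z.re : ℂ) + (y + z.im : ℝ) * I = z + y * I := by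
    apply Complex.ext <;> simp [add_comm]
  simp only [translate]

theorem integrable_norm_add_ofReal_mul_I_rpow_iff (hz : z.re ≠ 0) {s : ℝ} :
    Integrable (fun y : ℝ => ‖z + y * I‖ ^ s) ↔ s < -1 := by
  refine ⟨fun h => integrableAtFilter_rpow_atTop_iff.1 ?_,
    integrable_norm_add_ofReal_mul_I_rpow_of_lt hz⟩
  have measurable_rpow : Measurable fun y : ℝ => y ^ s := by fun_prop
  exact (isTheta_norm_add_ofReal_mul_I_rpow_atTop z s).isBigO_symm.integrableAtFilter
    measurable_rpow.aestronglyMeasurable.stronglyMeasurableAtFilter (h.integrableAtFilter atTop)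

theorem memLp_cpow_vertical_line_iff (hz : z.re ≠ 0) {p : ENNReal} (hp : p ≠ 0) (hp' : p ≠ ⊤)
    (l : ℂ) : MemLp (fun y : ℝ => (z + y * I) ^ l) p ↔ p.toReal * l.re < -1 := by
  have isTheta : (fun y : ℝ => ‖(z + y * I) ^ l‖ ^ p.toReal) =Θ[⊤]
      fun y => ‖z + y * I‖ ^ (l.re * p.toReal) := by
    simp_rw [Real.rpow_mul (norm_nonneg _)]
    have isTheta_norm := isTheta_cpow_const_rpow (b := l) (l := ⊤) fun _ _ =>
      Eventually.of_forall (add_ofReal_mul_I_ne_zero hz)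
    exact isTheta_norm.norm_left.rpow (.of_forall fun _ => norm_nonneg _)
      (.of_forall fun _ => by positivity)
  have measurable_cpow : Measurable fun y : ℝ => (z + y * I) ^ l := by fun_prop
  rw [← integrable_norm_rpow_iff measurable_cpow.aestronglyMeasurable hp hp',
    integrable_iff_of_isTheta_top (measurable_cpow.norm.pow_const _).aestronglyMeasurable
      (continuous_norm_add_ofReal_mul_I_rpow hz _).aestronglyMeasurable isTheta,
    integrable_norm_add_ofReal_mul_I_rpow_iff hz, mul_comm]

theorem memLp_two_cpow_vertical_line_iff (hz : z.re ≠ 0) (l : ℂ) :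
    MemLp (fun y : ℝ => (z + y * I) ^ l) 2 ↔ l.re < -(1 / 2) := by
  rw [memLp_cpow_vertical_line_iff hz two_ne_zero ENNReal.ofNat_ne_top, ENNReal.toReal_ofNat]
  constructor <;> intro h <;> linarith

theorem eLpNorm_cpow_vertical_line_le {l : ℂ} (hz : 0 < z.re) (hl : l.re ≤ 0) {x : ℝ} (hx : 0 ≤ x)
    (p : ENNReal) :
    eLpNorm (fun y : ℝ => (x + z + y * I) ^ l) p ≤
      ENNReal.ofReal (Real.exp (2 * Real.pi * |l.im|)) *
        eLpNorm (fun y : ℝ => (z + y * I) ^ l) p :=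
  eLpNorm_le_mul_eLpNorm_of_ae_le_mul (.of_forall fun y =>
    norm_cpow_le_exp_mul_norm_cpow_of_norm_le (add_ofReal_mul_I_ne_zero hz.ne' y)
      (by simpa only [add_assoc] using norm_le_norm_ofReal_add (by simpa using hz.le) hx) hl) p

end VerticalLine

theorem lintegral_nnnorm_sq_eq_eLpNorm_two_sq {α E : Type*} [MeasurableSpace α] {μ : Measure α}
    [NormedAddCommGroup E] (f : α → E) :
    ∫⁻ a, (‖f a‖₊ : ENNReal) ^ 2 ∂μ = eLpNorm f 2 μ ^ 2 := by
  simpa [enorm_eq_nnnorm] using (eLpNorm_nnreal_pow_eq_lintegral (f := f) (μ := μ) two_ne_zero).symm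

theorem cpow_mem_H2_iff (c : ℂ) (hc : 0 < c.re) (l : ℂ) :
    (⨆ x ∈ Set.Ioi (0 : ℝ),
        ∫⁻ y : ℝ, (‖((x : ℂ) + (y : ℂ) * Complex.I + c) ^ l‖₊ : ENNReal) ^ 2) < ⊤ ↔
      l.re < -(1 / 2) := by
  simp_rw [lintegral_nnnorm_sq_eq_eLpNorm_two_sq, add_right_comm _ _ c]
  constructor
  · intro hsup
    have line_lt_top : eLpNorm (fun y : ℝ => ((1 : ℝ) + c + y * I) ^ l) 2 ^ 2 < ⊤ :=
      (le_iSup₂_of_le 1 one_pos le_rfl).trans_lt hsup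
    have measurable_line : Measurable fun y : ℝ => ((1 : ℝ) + c + y * I) ^ l := by fun_prop
    have re_pos : 0 < ((1 : ℝ) + c).re := by simp only [add_re, ofReal_re]; linarith
    exact (memLp_two_cpow_vertical_line_iff re_pos.ne' l).1
      ⟨measurable_line.aestronglyMeasurable,
        (ENNReal.pow_lt_top_iff.1 line_lt_top).resolve_right two_ne_zero⟩
  · intro hl
    have boundary_lt_top := ((memLp_two_cpow_vertical_line_iff hc.ne' l).2 hl).eLpNorm_lt_top
    have line_le_boundary : ∀ x > (0 : ℝ), eLpNorm (fun y : ℝ => (x + c + y * I) ^ l) 2 ^ 2 ≤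
        (ENNReal.ofReal (Real.exp (2 * Real.pi * |l.im|)) *
          eLpNorm (fun y : ℝ => (c + y * I) ^ l) 2) ^ 2 := fun x hx => by
      gcongr
      exact eLpNorm_cpow_vertical_line_le hc (by linarith) hx.le 2
    refine (iSup₂_le line_le_boundary).trans_lt ?_
    exact ENNReal.pow_lt_top (ENNReal.mul_lt_top ENNReal.ofReal_lt_top boundary_lt_top)
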